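/- arXiv:2403.17490 — 2 statements merged into one kernel-verified Lean document; each statement's English description precedes it below -/
import Mathlib

section
/- Let q₀,…,q_r be any basis of Sym^d(W*) with dual basis q₀*,…,q_r* ∈ Sym^d(W) under the apolarity pairing. Then for every f ∈ Sym^{kd}(W*): ((kd)!/d!^k) · f = ∑_{0 ≤ i₁,…,i_k ≤ r} D(q_{i₁}* ⋯ q_{i_k}*, f) · q_{i₁} ⋯ q_{i_k}. -/
open MvPolynomial

noncomputable section

def derivOp (K : Type*) [Field K] {σ : Type*} [Fintype σ] [DecidableEq σ]
    (a : σ →₀ ℕ) : Module.End K (MvPolynomial σ K) :=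
  (Finset.univ.toList.map fun j : σ => ((MvPolynomial.pderiv j).toLinearMap ^ (a j))).prod

def apol {K : Type*} [Field K] {σ : Type*} [Fintype σ] [DecidableEq σ]
    (u P : MvPolynomial σ K) : MvPolynomial σ K :=
  ∑ a ∈ u.support, u.coeff a • derivOp K a P

def apolS {K : Type*} [Field K] {σ : Type*} [Fintype σ] [DecidableEq σ]
    (u P : MvPolynomial σ K) : K :=
  MvPolynomial.constantCoeff (apol u P)

def MonIdx (m d : ℕ) : Type := {v : Fin m → ℕ // v ∈ Finset.Nat.antidiagonalTuple m d}

instance (m d : ℕ) : Fintype (MonIdx m d) := by unfold MonIdx; infer_instance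
instance (m d : ℕ) : DecidableEq (MonIdx m d) := by unfold MonIdx; infer_instance

theorem coeff_pderiv_pow {K σ : Type*} [Field K] (j : σ) (e : ℕ) (P : MvPolynomial σ K)
    {m : σ →₀ ℕ} (hm : m j = 0) :
    coeff m (((pderiv j).toLinearMap ^ e) P) =
      coeff (m + Finsupp.single j e) P * (e.factorial : K) := by
  induction e generalizing P with
  | zero => simp
  | succ e ih =>
    rw [pow_succ, Module.End.mul_apply, ih]
    simp only [Derivation.coeFn_coe, coeff_pderiv, Finsupp.add_apply, hm, Finsupp.single_eq_same,
      Nat.factorial_succ, add_assoc, ← Finsupp.single_add]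
    push_cast
    ring

theorem coeff_list_prod_pderiv_pow {K σ : Type*} [Field K] (a : σ →₀ ℕ) (l : List σ) (hl : l.Nodup)
    (P : MvPolynomial σ K) {m : σ →₀ ℕ} (hm : ∀ j ∈ l, m j = 0) :
    coeff m ((l.map fun j => (pderiv j).toLinearMap ^ a j).prod P) =
      coeff (m + (l.map fun j => Finsupp.single j (a j)).sum) P *
        (l.map fun j => ((a j).factorial : K)).prod := by
  induction l generalizing m with
  | nil => simp
  | cons j l ih =>
    obtain ⟨hj, hl⟩ := List.nodup_cons.mp hl
    simp only [List.map_cons, List.prod_cons, List.sum_cons, Module.End.mul_apply]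
    rw [coeff_pderiv_pow _ _ _ (hm j (by simp)), ih hl]
    · rw [add_assoc]; ring
    · intro i hi
      have : i ≠ j := by rintro rfl; exact hj hi
      simp [hm i (by simp [hi]), this.symm]

section PairingForm

variable {K σ : Type*} [Field K] [Fintype σ]

/-- Pairing with `f` in the `x`-variables, as a linear map over the polynomial ring in the
`y`-variables. -/
def apolExt (f : MvPolynomial σ K) :
    MvPolynomial σ (MvPolynomial σ K) →ₗ[MvPolynomial σ K] MvPolynomial σ K :=
  ∑ a ∈ f.support, (C (coeff a f * ∏ j, ((a j).factorial : K)) : MvPolynomial σ K) •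
    lcoeff (MvPolynomial σ K) a

theorem apolExt_apply (f : MvPolynomial σ K) (U : MvPolynomial σ (MvPolynomial σ K)) :
    apolExt f U = ∑ a ∈ f.support, C (coeff a f * ∏ j, ((a j).factorial : K)) * coeff a U := by
  simp [apolExt, LinearMap.sum_apply]

variable (K σ) in
/-- The universal pairing form `∑ⱼ yⱼ xⱼ`, with the `y`-variables in the coefficient ring. -/
def pairingForm : MvPolynomial σ (MvPolynomial σ K) :=
  ∑ j, (X j : MvPolynomial σ K) • X j

theorem coeff_pairingForm_pow (m : ℕ) (a : σ →₀ ℕ) :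
    coeff a (pairingForm K σ ^ m) =
      if a.degree = m then (a.multinomial : MvPolynomial σ K) * monomial a 1 else 0 := by
  rw [pairingForm, coeff_linearCombination_X_pow_of_fintype]
  simp [monomial_eq, Finsupp.degree_apply, Finsupp.sum]

theorem prod_factorial_mul_multinomial (a : σ →₀ ℕ) :
    (∏ j, ((a j).factorial : K)) * a.multinomial = (a.degree.factorial : K) := by
  rw [Finsupp.multinomial_eq_of_support_subset (Finset.subset_univ a.support),
    Finsupp.degree_eq_sum, ← Nat.multinomial_spec]
  push_cast
  rfl

theorem apolExt_pairingForm_pow {f : MvPolynomial σ K} {m : ℕ} (hf : f.IsHomogeneous m) :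
    apolExt f (pairingForm K σ ^ m) = (m.factorial : K) • f := by
  rw [apolExt_apply]
  conv_rhs => rw [f.as_sum, Finset.smul_sum]
  refine Finset.sum_congr rfl fun a ha => ?_
  have hdeg : a.degree = m := by
    by_contra h
    exact mem_support_iff.mp ha (hf.coeff_eq_zero h)
  rw [coeff_pairingForm_pow, if_pos hdeg, ← mul_assoc, ← C_eq_coe_nat (σ := σ) (R := K), ← C_mul,
    mul_assoc, prod_factorial_mul_multinomial, hdeg, C_mul_monomial, smul_monomial]
  simp [mul_comm]

end PairingForm

section Apolarity

variable {K : Type*} [Field K] {σ : Type*} [Fintype σ] [DecidableEq σ]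

theorem constantCoeff_derivOp (a : σ →₀ ℕ) (P : MvPolynomial σ K) :
    constantCoeff (derivOp K a P) = coeff a P * ∏ j, ((a j).factorial : K) := by
  rw [constantCoeff_eq, derivOp, coeff_list_prod_pderiv_pow a _ (Finset.nodup_toList _) P (by simp),
    Finset.sum_map_toList, Finset.prod_map_toList, Finsupp.univ_sum_single, zero_add]

theorem apolS_eq_sum (u P : MvPolynomial σ K) {s : Finset (σ →₀ ℕ)} (hs : P.support ⊆ s) :
    apolS u P = ∑ a ∈ s, coeff a u * (coeff a P * ∏ j, ((a j).factorial : K)) := by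
  have h : ∀ a, constantCoeff (coeff a u • derivOp K a P) =
      coeff a u * (coeff a P * ∏ j, ((a j).factorial : K)) := fun a => by
    rw [constantCoeff_smul, constantCoeff_derivOp, smul_eq_mul]
  simp only [apolS, apol, map_sum, h]
  rw [Finset.sum_subset (Finset.subset_union_left (s₂ := s)),
    ← Finset.sum_subset (Finset.subset_union_right (s₁ := u.support))]
  · intro a _ ha
    rw [notMem_support_iff.mp (fun h => ha (hs h))]; simp
  · intro a _ ha
    rw [notMem_support_iff.mp ha]; simp

theorem apolS_monomial_one (u : MvPolynomial σ K) (a : σ →₀ ℕ) :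
    apolS u (monomial a 1) = coeff a u * ∏ j, ((a j).factorial : K) := by
  rw [apolS_eq_sum u _ (s := {a}) support_monomial_subset]; simp

theorem apolExt_C_mul_map_C (f u Q : MvPolynomial σ K) :
    apolExt f (C Q * map C u) = apolS u f • Q := by
  rw [apolExt_apply, apolS_eq_sum u f subset_rfl, Finset.sum_smul]
  refine Finset.sum_congr rfl fun a _ => ?_
  rw [coeff_C_mul, coeff_map, smul_eq_C_mul, C_mul (a := coeff a u)]
  ring

theorem apolS_add_right (u P Q : MvPolynomial σ K) : apolS u (P + Q) = apolS u P + apolS u Q := by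
  simp [apolS, apol, smul_add, Finset.sum_add_distrib]

theorem apolS_smul_right (u P : MvPolynomial σ K) (c : K) : apolS u (c • P) = c * apolS u P := by
  simp [apolS, apol, Finset.mul_sum, mul_left_comm]

theorem apolS_zero_right (u : MvPolynomial σ K) : apolS u 0 = 0 := by
  simp [apolS, apol]

theorem sum_apolS_smul_eq_of_mem_span {ι : Type*} [Fintype ι] [DecidableEq ι]
    {q qstar : ι → MvPolynomial σ K}
    (hdual : ∀ i j, apolS (qstar i) (q j) = if i = j then 1 else 0)
    {g : MvPolynomial σ K} (hg : g ∈ Submodule.span K (Set.range q)) :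
    ∑ i, apolS (qstar i) g • q i = g := by
  induction hg using Submodule.span_induction with
  | mem x hx => obtain ⟨j, rfl⟩ := hx; simp [hdual]
  | zero => simp [apolS_zero_right]
  | add x y _ _ hx hy => simp only [apolS_add_right, add_smul, Finset.sum_add_distrib, hx, hy]
  | smul c x _ hx => simp only [apolS_smul_right, mul_smul, ← Finset.smul_sum, hx]

theorem factorial_smul_sum_dual_basis {ι : Type*} [Fintype ι] [DecidableEq ι] {d : ℕ}
    {q qstar : ι → MvPolynomial σ K} (hqstar : ∀ i, (qstar i).IsHomogeneous d)
    (hspan : Submodule.span K (Set.range q) = homogeneousSubmodule σ K d)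
    (hdual : ∀ i j, apolS (qstar i) (q j) = if i = j then 1 else 0) :
    (d.factorial : K) • ∑ i, C (q i) * map C (qstar i) = pairingForm K σ ^ d := by
  ext1 a
  rw [coeff_smul, coeff_sum, coeff_pairingForm_pow]
  simp only [coeff_C_mul, coeff_map]
  split_ifs with ha
  · have hmem : monomial a (1 : K) ∈ Submodule.span K (Set.range q) := by
      rw [hspan, mem_homogeneousSubmodule]
      exact isHomogeneous_monomial _ ha
    conv_rhs => rw [← sum_apolS_smul_eq_of_mem_span hdual hmem]
    rw [← ha, ← prod_factorial_mul_multinomial (K := K) a, Finset.smul_sum, Finset.mul_sum]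
    refine Finset.sum_congr rfl fun i _ => ?_
    rw [apolS_monomial_one, ← C_eq_coe_nat (σ := σ) (R := K)]
    simp only [smul_eq_C_mul, C_mul]
    ring
  · rw [Finset.sum_eq_zero, smul_zero]
    intro i _
    rw [(hqstar i).coeff_eq_zero ha, C_0, mul_zero]

theorem factorial_pow_smul_sum_apolS_prod {ι : Type*} [Fintype ι] [DecidableEq ι] {d : ℕ} (k : ℕ)
    {q qstar : ι → MvPolynomial σ K} (hqstar : ∀ i, (qstar i).IsHomogeneous d)
    (hspan : Submodule.span K (Set.range q) = homogeneousSubmodule σ K d)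
    (hdual : ∀ i j, apolS (qstar i) (q j) = if i = j then 1 else 0)
    {f : MvPolynomial σ K} (hf : f.IsHomogeneous (k * d)) :
    (d.factorial : K) ^ k • ∑ t : Fin k → ι, apolS (∏ l, qstar (t l)) f • ∏ l, q (t l) =
      ((k * d).factorial : K) • f := by
  have hprod : ∑ t : Fin k → ι, C (∏ l, q (t l)) * map C (∏ l, qstar (t l)) =
      (∑ i, C (q i) * map C (qstar i)) ^ k := by
    simp only [map_prod, ← Finset.prod_mul_distrib]
    rw [Fintype.sum_pow]
  rw [← apolExt_pairingForm_pow hf, mul_comm k d, pow_mul,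
    ← factorial_smul_sum_dual_basis hqstar hspan hdual, smul_pow, ← hprod,
    LinearMap.map_smul_of_tower, map_sum]
  simp only [apolExt_C_mul_map_C]

end Apolarity

/-- Taylor-like identity for an arbitrary basis `q₀,…,q_r` of
`Sym^d(W*)` with dual basis `q₀*,…,q_r* ∈ Sym^d(W)` under the apolarity
pairing: for every `f ∈ Sym^{kd}(W*)`,
`((kd)!/d!^k)·f = ∑_{i₁,…,i_k} D(q_{i₁}*⋯q_{i_k}*, f)·q_{i₁}⋯q_{i_k}`. -/
theorem taylor_identity_general_basis
    (K : Type*) [Field K] (n d k : ℕ) (hd : 1 ≤ d) (hk : 1 ≤ k)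
    (hchar : ∀ i : ℕ, 0 < i → i ≤ k * d → (i : K) ≠ 0)
    (q qstar : MonIdx (n + 1) d → MvPolynomial (Fin (n + 1)) K)
    (hq : ∀ i, (q i).IsHomogeneous d) (hqstar : ∀ i, (qstar i).IsHomogeneous d)
    (hspan : Submodule.span K (Set.range q) = homogeneousSubmodule (Fin (n + 1)) K d)
    (hdual : ∀ i j, apolS (qstar i) (q j) = if i = j then 1 else 0)
    (f : MvPolynomial (Fin (n + 1)) K) (hf : f.IsHomogeneous (k * d)) :
    ((Nat.factorial (k * d) : K) / (Nat.factorial d : K) ^ k) • f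
      = ∑ t : Fin k → MonIdx (n + 1) d,
          apolS (∏ l, qstar (t l)) f • ∏ l, q (t l) := by
  have hfac : (d.factorial : K) ^ k ≠ 0 := by
    refine pow_ne_zero _ ?_
    rw [← Finset.prod_range_add_one_eq_factorial, Nat.cast_prod, Finset.prod_ne_zero_iff]
    intro i hi
    exact hchar _ i.succ_pos
      ((Finset.mem_range.mp hi).trans_le (Nat.le_mul_of_pos_left d hk))
  rw [div_eq_inv_mul, mul_smul, inv_smul_eq_iff₀ hfac]
  exact (factorial_pow_smul_sum_apolS_prod k hqstar hspan hdual hf).symm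
end
end

section
/- For binary forms, the linear map τ_r : Sym^r(W*) → Sym^r(W) defined on monomials by τ_r(x₀^i x₁^j) = r!·(−1)^i·w₀^j w₁^i satisfies, for all C ∈ Sym^r(W*) and C' ∈ Sym^{r'}(W*) with r' ≥ r: D(τ_r(C), C') = (C, C')_r, where (C, C')_r is the r-th transvectant. -/
open MvPolynomial

noncomputable section

/-- The exponent vector `(a, b)` for binary forms. -/
def bexp (a b : ℕ) : Fin 2 →₀ ℕ := Finsupp.equivFunOnFinite.symm ![a, b]

/-- The transvectant of level `l` of two binary forms:
`(f,g)_l = ∑_{i=0}^l (−1)^i binom(l,i) (∂^l f/∂x₀^i ∂x₁^{l−i}) (∂^l g/∂x₀^{l−i} ∂x₁^i)`. -/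
def transvect {K : Type*} [Field K] (l : ℕ)
    (f g : MvPolynomial (Fin 2) K) : MvPolynomial (Fin 2) K :=
  ∑ i ∈ Finset.range (l + 1),
    ((-1 : K) ^ i * (l.choose i : K)) •
      (derivOp K (bexp i (l - i)) f * derivOp K (bexp (l - i) i) g)

/-- The linear map `τ_r : Sym^r(W*) → Sym^r(W)` for binary forms, determined by
`τ_r(x₀^i x₁^j) = r!·(−1)^i·w₀^j w₁^i`. -/
def tauBin (K : Type*) [Field K] (r : ℕ) (P : MvPolynomial (Fin 2) K) :
    MvPolynomial (Fin 2) K :=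
  ∑ a ∈ P.support,
    (P.coeff a * (Nat.factorial r : K) * (-1 : K) ^ (a 0)) •
      monomial (bexp (a 1) (a 0)) 1

theorem apol_eq_constr {K σ : Type*} [Field K] [Fintype σ] [DecidableEq σ]
    (u P : MvPolynomial σ K) :
    apol u P = (basisMonomials σ K).constr K (fun a => derivOp K a P) u := by
  rw [Module.Basis.constr_apply]
  rfl

theorem pderiv_pow_monomial {K σ : Type*} [Field K] (j : σ) (n : ℕ)
    (s : σ →₀ ℕ) (c : K) :
    ((pderiv j).toLinearMap ^ n : Module.End K (MvPolynomial σ K)) (monomial s c) =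
      monomial (s - Finsupp.single j n) (c * ((s j).descFactorial n : K)) := by
  classical
  induction n with
  | zero => simp
  | succ n ih =>
    rw [pow_succ', Module.End.mul_apply, ih, Derivation.coeFn_coe, pderiv_monomial,
      Nat.descFactorial_succ]
    refine congr_arg₂ (fun s c => monomial s c) ?_ ?_
    · ext k
      by_cases h : j = k <;> simp [h]
      omega
    · simp
      ring

theorem derivOp_monomial_fin_two {K : Type*} [Field K] (a s : Fin 2 →₀ ℕ) (c : K) :
    derivOp K a (monomial s c) =
      monomial (s - a)
        (c * (((s 0).descFactorial (a 0) * (s 1).descFactorial (a 1) : ℕ) : K)) := by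
  have hperm : (Finset.univ : Finset (Fin 2)).toList.Perm [0, 1] := by
    refine (List.perm_ext_iff_of_nodup (Finset.nodup_toList _) (by decide)).2 fun x => ?_
    fin_cases x <;> simp
  have hlist : (Finset.univ : Finset (Fin 2)).toList = [0, 1] ∨
      (Finset.univ : Finset (Fin 2)).toList = [1, 0] := by
    have h := List.mem_permutations.2 hperm
    simpa [List.permutations, List.permutationsAux, List.permutationsAux.rec] using h
  rcases hlist with h | h <;>
  · simp only [derivOp, h, List.map_cons, List.map_nil, List.prod_cons, List.prod_nil, mul_one,
      Module.End.mul_apply, pderiv_pow_monomial]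
    refine congr_arg₂ (fun s c => monomial s c) ?_ ?_
    · ext k
      fin_cases k <;> simp
    · simp
      ring

theorem eq_bexp_of_degree_eq {r : ℕ} {s : Fin 2 →₀ ℕ} (h : s.degree = r) :
    s = bexp (s 0) (r - s 0) := by
  rw [Finsupp.degree_eq_sum, Fin.sum_univ_two] at h
  ext k
  fin_cases k <;> simp [bexp]
  omega

theorem sum_support_eq_sum_range_of_isHomogeneous {K M : Type*} [Field K] [AddCommMonoid M]
    {r : ℕ} {P : MvPolynomial (Fin 2) K} (hP : P.IsHomogeneous r)
    (f : (Fin 2 →₀ ℕ) → K → M) (hf : ∀ a, f a 0 = 0) :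
    ∑ a ∈ P.support, f a (P.coeff a) =
      ∑ i ∈ Finset.range (r + 1), f (bexp i (r - i)) (P.coeff (bexp i (r - i))) := by
  have hinj : Set.InjOn (fun i => bexp i (r - i)) (Finset.range (r + 1)) := by
    intro i _ j _ hij
    simpa [bexp] using DFunLike.congr_fun hij 0
  rw [← Finset.sum_image (f := fun a => f a (P.coeff a)) hinj]
  refine Finset.sum_subset (fun a ha => ?_) fun a _ ha => ?_
  · have hdeg : a.degree = r := by
      rw [Finsupp.degree_eq_weight_one]
      exact hP (mem_support_iff.1 ha)
    refine Finset.mem_image.2 ⟨a 0, ?_, (eq_bexp_of_degree_eq hdeg).symm⟩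
    rw [Finsupp.degree_eq_sum, Fin.sum_univ_two] at hdeg
    exact Finset.mem_range.2 (by omega)
  · rw [notMem_support_iff.1 ha, hf]

theorem derivOp_bexp_of_isHomogeneous {K : Type*} [Field K] {r i : ℕ} (hi : i ≤ r)
    {P : MvPolynomial (Fin 2) K} (hP : P.IsHomogeneous r) :
    derivOp K (bexp i (r - i)) P =
      C (P.coeff (bexp i (r - i)) * ((i.factorial * (r - i).factorial : ℕ) : K)) := by
  conv_lhs => rw [P.as_sum, map_sum]
  rw [sum_support_eq_sum_range_of_isHomogeneous hP
      (fun a c => derivOp K (bexp i (r - i)) (monomial a c)) (by simp),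
    Finset.sum_eq_single_of_mem i (Finset.mem_range.2 (by omega)), derivOp_monomial_fin_two]
  · simp [bexp, Nat.descFactorial_self]
  · intro j hj hne
    rw [Finset.mem_range] at hj
    rw [derivOp_monomial_fin_two]
    have h : j < i ∨ r - j < r - i := by omega
    rcases h with h | h <;> simp [bexp, Nat.descFactorial_of_lt h]

/-- for binary forms `C ∈ Sym^r(W*)` and `C' ∈ Sym^{r'}(W*)` with
`r' ≥ r`, the apolarity pairing against `τ_r(C)` computes the `r`-th
transvectant: `D(τ_r(C), C') = (C, C')_r`. -/
theorem apol_tau_eq_transvectant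
    (K : Type*) [Field K] [IsAlgClosed K] (r r' : ℕ) (hrr : r ≤ r')
    (hchar : ∀ i : ℕ, 0 < i → i ≤ r → (i : K) ≠ 0)
    (C C' : MvPolynomial (Fin 2) K)
    (hC : C.IsHomogeneous r) (hC' : C'.IsHomogeneous r') :
    apol (tauBin K r C) C' = transvect r C C' := by
  have hτ : apol (tauBin K r C) C' = ∑ a ∈ C.support,
      (C.coeff a * (r.factorial : K) * (-1 : K) ^ (a 0)) •
        derivOp K (bexp (a 1) (a 0)) C' := by
    simp only [apol_eq_constr, tauBin, map_sum, map_smul]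
    refine Finset.sum_congr rfl fun a _ => ?_
    rw [← congr_fun (coe_basisMonomials (Fin 2) K), Module.Basis.constr_basis]
  rw [hτ, sum_support_eq_sum_range_of_isHomogeneous hC
    (fun a c => (c * (r.factorial : K) * (-1 : K) ^ (a 0)) •
      derivOp K (bexp (a 1) (a 0)) C') (by simp)]
  refine Finset.sum_congr rfl fun i hi => ?_
  have hir : i ≤ r := Nat.lt_succ_iff.1 (Finset.mem_range.1 hi)
  rw [derivOp_bexp_of_isHomogeneous hir hC, ← smul_eq_C_mul, smul_smul,
    ← Nat.choose_mul_factorial_mul_factorial hir]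
  congr 1
  simp [bexp]
  ring
end
end
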